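/- arXiv:math/0703824 — 11 statements merged into one kernel-verified Lean document; each statement's English description precedes it below -/
import Mathlib

section
/- The positive root B₁ of the quadratic −λ − (r − λ + δ)B + δB² = 0 satisfies B₁ = p/(p − 1). -/
/-!
The two discriminants coincide; call their common square root `s`. Then
`p - 1 = ((lam + δ - r) + s) / (2 r)`, which is positive because
`s ^ 2 = (lam + δ - r) ^ 2 + 4 r δ` gives `s > |lam + δ - r|`. Clearing denominators, the claim
is `(δ + s) ^ 2 - (r - lam) ^ 2 = 2 δ (r + lam + δ + s)`, which follows from the value of `s ^ 2`.
-/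


/-- The positive root `B₁` of the quadratic `−λ − (r − λ + δ)B + δB² = 0` satisfies
`B₁ = p/(p − 1)`. -/
theorem stmt_3 (r lam mu sigma : ℝ) (hr : 0 < r) (hlam : 0 < lam)
    (hmu : r < mu) (hsigma : 0 < sigma)
    (δ : ℝ) (hδ : δ = (1 / 2) * ((mu - r) / sigma) ^ 2)
    (p : ℝ)
    (hp : p = (1 / (2 * r)) *
      ((r + lam + δ) + Real.sqrt ((r + lam + δ) ^ 2 - 4 * r * lam)))
    (B₁ : ℝ)
    (hB₁ : B₁ = (1 / (2 * δ)) *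
      ((r - lam + δ) + Real.sqrt ((r - lam + δ) ^ 2 + 4 * lam * δ))) :
    B₁ = p / (p - 1) := by
  have hδpos : 0 < δ := by
    have : 0 < (mu - r) / sigma := div_pos (sub_pos.2 hmu) hsigma
    rw [hδ]; positivity
  clear hδ
  have hdisc : (r + lam + δ) ^ 2 - 4 * r * lam = (r - lam + δ) ^ 2 + 4 * lam * δ := by ring
  rw [hdisc] at hp
  have hs2 : Real.sqrt ((r - lam + δ) ^ 2 + 4 * lam * δ) ^ 2
      = (r - lam + δ) ^ 2 + 4 * lam * δ := Real.sq_sqrt (by positivity)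
  have hs0 := Real.sqrt_nonneg ((r - lam + δ) ^ 2 + 4 * lam * δ)
  generalize Real.sqrt ((r - lam + δ) ^ 2 + 4 * lam * δ) = s at hp hB₁ hs2 hs0
  have hpos : 0 < lam + δ - r + s := by
    have : |lam + δ - r| < s :=
      abs_lt_of_sq_lt_sq (by nlinarith [mul_pos hr hδpos]) hs0
    linarith [neg_abs_le (lam + δ - r)]
  have hp1 : p - 1 = (lam + δ - r + s) / (2 * r) := by
    rw [hp]; field_simp; ring
  have hp1pos : 0 < p - 1 := by rw [hp1]; positivity
  rw [eq_div_iff hp1pos.ne', hp1, hB₁, hp]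
  field_simp
  linear_combination hs2
end

section
/- Let x < c/r and define ψ(w) = ((c − r w)/(c − r x))^p for w ∈ [x, c/r]. Then ψ is strictly decreasing and strictly convex on [x, c/r), ψ(x) = 1, ψ(c/r) = 0, and for every w ∈ (x, c/r) the Hamilton–Jacobi–Bellman equation λ ψ(w) = (r w − c) ψ′(w) + min over π ∈ ℝ of [(μ − r) π ψ′(w) + (1/2) σ² π² ψ″(w)] holds, with the minimum over π attained uniquely at π^ψ(w) = ((μ − r)/σ²) (1/(p − 1)) (c/r − w). -/
open Set

/-!
`p` is the larger root of `r p² - (r + λ + δ) p + λ`; this quadratic takes the value `-δ < 0` at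
`1`, so `p > 1`. Differentiating, `(c - r w) ψ' = -r p ψ` and `(c - r w)² ψ'' = r² p (p - 1) ψ`
for `w < c / r`, which gives monotonicity and convexity. The first-order condition
`(μ - r) ψ' = -σ² π^ψ ψ''` then holds, so completing the square shows that the value at `π` exceeds
the value at `π^ψ` by `σ² ψ'' (π - π^ψ)² / 2`. Inserting `π^ψ` into the equation reduces it to the
quadratic equation for `p`.
-/

/-- The quadratic equation satisfied by the exponent `p`, and `p > 1`. -/
lemma exponent_spec {r lam d p : ℝ} (hr : 0 < r) (hd : 0 < d)
    (hp : p = (1 / (2 * r)) *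
      ((r + lam + d) + Real.sqrt ((r + lam + d) ^ 2 - 4 * r * lam))) :
    1 < p ∧ r * p ^ 2 - (r + lam + d) * p + lam = 0 := by
  -- The discriminant is `(r - λ - δ)² + 4 r δ`, which yields both nonnegativity and `p > 1`.
  have hD : (r - lam - d) ^ 2 < (r + lam + d) ^ 2 - 4 * r * lam := by
    nlinarith [mul_pos hr hd]
  have hs := Real.sq_sqrt ((sq_nonneg (r - lam - d)).trans hD.le)
  have hlt := Real.lt_sqrt_of_sq_lt hD
  set s := Real.sqrt ((r + lam + d) ^ 2 - 4 * r * lam)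
  have hps : s = 2 * r * p - (r + lam + d) := by
    rw [hp]; field_simp; ring
  rw [hps] at hs hlt
  constructor
  · have : r * 1 < r * p := by linarith
    exact lt_of_mul_lt_mul_left this hr.le
  · have : 4 * r * (r * p ^ 2 - (r + lam + d) * p + lam) = 0 := by linarith
    exact (mul_eq_zero.mp this).resolve_left (by positivity)

lemma hasDerivAt_ruin {r c K q w : ℝ} (hK : 0 < K) (hw : 0 < c - r * w) :
    HasDerivAt (fun w => ((c - r * w) / K) ^ q)
      (-r * q / K * ((c - r * w) / K) ^ (q - 1)) w := by
  have h1 : HasDerivAt (fun w => (c - r * w) / K) (-r / K) w := by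
    simpa using (((hasDerivAt_id w).const_mul r).const_sub c).div_const K
  convert h1.rpow_const (p := q) (Or.inl (div_pos hw hK).ne') using 1
  ring

/-- Properties of the minimum probability of lifetime ruin
`ψ(w) = ((c − r w)/(c − r x))^p` on `[x, c/r]`: it is strictly decreasing and strictly
convex on `[x, c/r)`, has boundary values `ψ(x) = 1` and `ψ(c/r) = 0`, and on `(x, c/r)`
it solves the HJB equation, the minimum over `π` being attained uniquely at
`π^ψ(w) = ((μ − r)/σ²)(1/(p − 1))(c/r − w)`. -/
theorem stmt_4 (r lam c mu sigma : ℝ) (hr : 0 < r) (hlam : 0 < lam) (hc : 0 < c)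
    (hmu : r < mu) (hsigma : 0 < sigma)
    (δ : ℝ) (hδ : δ = (1 / 2) * ((mu - r) / sigma) ^ 2)
    (p : ℝ)
    (hp : p = (1 / (2 * r)) *
      ((r + lam + δ) + Real.sqrt ((r + lam + δ) ^ 2 - 4 * r * lam)))
    (x : ℝ) (hx : x < c / r)
    (ψ : ℝ → ℝ) (hψ : ∀ w : ℝ, ψ w = ((c - r * w) / (c - r * x)) ^ p) :
    StrictAntiOn ψ (Ico x (c / r)) ∧
    StrictConvexOn ℝ (Ico x (c / r)) ψ ∧
    ψ x = 1 ∧ ψ (c / r) = 0 ∧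
    ∀ w ∈ Ioo x (c / r),
      (lam * ψ w = (r * w - c) * deriv ψ w +
        ((mu - r) * (((mu - r) / sigma ^ 2) * (1 / (p - 1)) * (c / r - w)) * deriv ψ w +
          (1 / 2) * sigma ^ 2 * (((mu - r) / sigma ^ 2) * (1 / (p - 1)) * (c / r - w)) ^ 2 *
            deriv (deriv ψ) w)) ∧
      ∀ pp : ℝ, pp ≠ ((mu - r) / sigma ^ 2) * (1 / (p - 1)) * (c / r - w) →
        (mu - r) * (((mu - r) / sigma ^ 2) * (1 / (p - 1)) * (c / r - w)) * deriv ψ w +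
          (1 / 2) * sigma ^ 2 * (((mu - r) / sigma ^ 2) * (1 / (p - 1)) * (c / r - w)) ^ 2 *
            deriv (deriv ψ) w <
        (mu - r) * pp * deriv ψ w +
          (1 / 2) * sigma ^ 2 * pp ^ 2 * deriv (deriv ψ) w := by
  have hd : 0 < δ := by
    have : 0 < (mu - r) / sigma := div_pos (by linarith) hsigma
    rw [hδ]; positivity
  obtain ⟨hp1, hquad⟩ := exponent_spec hr hd hp
  have hp0 : 0 < p := by linarith
  have hpos : ∀ {w : ℝ}, w < c / r → 0 < c - r * w := fun {w} h => by
    rw [lt_div_iff₀ hr] at h; linarith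
  have hK : 0 < c - r * x := hpos hx
  set K := c - r * x
  obtain rfl : ψ = fun w => ((c - r * w) / K) ^ p := funext hψ
  clear hψ
  have hderiv : ∀ w < c / r, deriv (fun w => ((c - r * w) / K) ^ p) w =
      -r * p / K * ((c - r * w) / K) ^ (p - 1) :=
    fun w hw => (hasDerivAt_ruin hK (hpos hw)).deriv
  have hderiv2 : ∀ w < c / r, deriv (deriv (fun w => ((c - r * w) / K) ^ p)) w =
      -r * p / K * (-r * (p - 1) / K * ((c - r * w) / K) ^ (p - 1 - 1)) := by
    intro w hw
    have he : deriv (fun w => ((c - r * w) / K) ^ p) =ᶠ[nhds w]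
        fun w => -r * p / K * ((c - r * w) / K) ^ (p - 1) := by
      filter_upwards [Iio_mem_nhds hw] with y hy using hderiv y hy
    rw [he.deriv_eq]
    exact ((hasDerivAt_ruin hK (hpos hw)).const_mul _).deriv
  have hderiv2_pos : ∀ w < c / r,
      0 < deriv (deriv (fun w => ((c - r * w) / K) ^ p)) w := by
    intro w hw
    rw [hderiv2 w hw]
    have h1 : 0 < ((c - r * w) / K) ^ (p - 1 - 1) := Real.rpow_pos_of_pos (div_pos (hpos hw) hK) _
    have h2 : 0 < p - 1 := by linarith
    have : 0 < r * p / K * (r * (p - 1) / K * ((c - r * w) / K) ^ (p - 1 - 1)) := by positivity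
    convert this using 1
    ring
  refine ⟨?_, ?_, ?_, ?_, ?_⟩
  · intro a ha b hb hab
    have hb' := hpos hb.2
    refine Real.rpow_lt_rpow (by positivity) ?_ hp0
    gcongr
  · refine strictConvexOn_of_deriv2_pos (convex_Ico _ _) ?_ ?_
    · exact fun w hw => (hasDerivAt_ruin hK (hpos hw.2)).continuousAt.continuousWithinAt
    · intro w hw
      rw [interior_Ico] at hw
      exact hderiv2_pos w hw.2
  · change (K / K) ^ p = 1
    rw [div_self hK.ne', Real.one_rpow]
  · have : c - r * (c / r) = 0 := by field_simp; ring
    simp only [this, zero_div]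
    exact Real.zero_rpow hp0.ne'
  · intro w hw
    have hu := hpos hw.2
    have hD1 := hderiv w hw.2
    have hD2 := hderiv2 w hw.2
    have hD2pos := hderiv2_pos w hw.2
    have hv := div_pos hu hK
    have hp1' : p - 1 ≠ 0 := by linarith
    have hcw : c / r - w = (c - r * w) / r := by field_simp
    rw [Real.rpow_sub_one hv.ne'] at hD1
    rw [Real.rpow_sub_one hv.ne', Real.rpow_sub_one hv.ne'] at hD2
    rw [hcw]
    set D2 := deriv (deriv (fun w => ((c - r * w) / K) ^ p)) w
    set D1 := deriv (fun w => ((c - r * w) / K) ^ p) w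
    dsimp only
    set Y := ((c - r * w) / K) ^ p
    have hwu : r * w - c = -(c - r * w) := by ring
    rw [hwu]
    set u := c - r * w
    have hE1 : u * D1 = -(r * p * Y) := by
      rw [hD1]; field_simp
    have hE2 : u ^ 2 * D2 = r ^ 2 * p * (p - 1) * Y := by
      rw [hD2]; field_simp
    set A := (mu - r) / sigma ^ 2 * (1 / (p - 1)) * (u / r) with hA
    -- First-order condition for the minimum over `π`.
    have hfoc : (mu - r) * D1 = -(sigma ^ 2 * A * D2) := by
      have h : u * ((mu - r) * D1 + sigma ^ 2 * A * D2) = 0 := by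
        have e : u * (sigma ^ 2 * A * D2) = (mu - r) / ((p - 1) * r) * (u ^ 2 * D2) := by
          rw [hA]; field_simp
        have e1 : u * ((mu - r) * D1) = (mu - r) * (u * D1) := by ring
        rw [mul_add, e, e1, hE1, hE2]
        field_simp
        ring
      have := (mul_eq_zero.mp h).resolve_left hu.ne'
      linarith
    constructor
    · have e1 : (mu - r) * A * D1 + 1 / 2 * sigma ^ 2 * A ^ 2 * D2 =
          1 / 2 * (mu - r) * A * D1 := by linear_combination 1 / 2 * A * hfoc
      have e2 : 1 / 2 * (mu - r) * A * D1 = δ / ((p - 1) * r) * (u * D1) := by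
        rw [hA, hδ]; field_simp
      have e3 : -u * D1 = -(u * D1) := by ring
      rw [e1, e2, e3, hE1]
      field_simp
      linear_combination -Y * hquad
    · intro q hq
      have hsq : 0 < (q - A) ^ 2 := by
        have := sub_ne_zero.mpr hq
        positivity
      have hgap : 0 < 1 / 2 * sigma ^ 2 * D2 * (q - A) ^ 2 := by positivity
      linear_combination hgap + (A - q) * hfoc
end

section
/- If φ̃ : (0, y₀) → ℝ is twice differentiable, satisfies λ φ̃(y) + (r − λ) y φ̃′(y) − δ y² φ̃″(y) = c y for all y ∈ (0, y₀), and φ̃(y) → 0 as y → 0⁺, then there exists a real constant A₁ such that φ̃(y) = A₁ y^{B₁} + (c/r) y for all y ∈ (0, y₀); that is, the coefficient of y^{B₂} in the general solution must vanish. -/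
open Set Filter Topology

/-!
With `u y = φ y - (c / r) * y`, which solves the homogeneous equation, and `D` the operator
`y * d/dy`, the Euler equation factors as `(D - B₁) (D - B₂) u = (D - B₂) (D - B₁) u = 0`.
A solution of the first-order equation `D f = a f` is a multiple of `y ^ a`
(`eq_mul_rpow_of_euler`), so `(D - B₂) u = k₁ y ^ B₁` and `(D - B₁) u = k₂ y ^ B₂`
(`euler_factor`). Subtracting, `(B₁ - B₂) u = k₁ y ^ B₁ - k₂ y ^ B₂`. As `B₂ < 0 < B₁`, both
`y ^ B₁` and `y ^ (-B₂)` tend to `0` at `0⁺`; together with `u → 0` this forces `k₂ = 0`.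
-/

/-- The solutions of `y f' = a f` on `(0, y₀)` are the multiples of `y ^ a`, because
`y ^ (-a) * f y` has zero derivative there. -/
lemma eq_mul_rpow_of_euler {a y₀ : ℝ} (hy₀ : 0 < y₀) {f f' : ℝ → ℝ}
    (hf : ∀ y ∈ Ioo (0 : ℝ) y₀, HasDerivAt f (f' y) y)
    (hode : ∀ y ∈ Ioo (0 : ℝ) y₀, y * f' y = a * f y) :
    ∃ k : ℝ, ∀ y ∈ Ioo (0 : ℝ) y₀, f y = k * y ^ a := by
  have hg : ∀ y ∈ Ioo (0 : ℝ) y₀, HasDerivAt (fun y => y ^ (-a) * f y) 0 y := by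
    intro y hy
    have h := (Real.hasDerivAt_rpow_const (p := -a) (Or.inl hy.1.ne')).mul (hf y hy)
    refine h.congr_deriv ?_
    have hpow : y ^ (-a) = y ^ (-a - 1) * y := by
      rw [← Real.rpow_add_one hy.1.ne']
      ring_nf
    rw [hpow]
    linear_combination y ^ (-a - 1) * hode y hy
  have hmid : y₀ / 2 ∈ Ioo (0 : ℝ) y₀ := ⟨by linarith, by linarith⟩
  refine ⟨(y₀ / 2) ^ (-a) * f (y₀ / 2), fun y hy => ?_⟩
  have hconst : y ^ (-a) * f y = (y₀ / 2) ^ (-a) * f (y₀ / 2) :=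
    isOpen_Ioo.is_const_of_deriv_eq_zero isPreconnected_Ioo
      (fun z hz => (hg z hz).differentiableAt.differentiableWithinAt)
      (fun z hz => (hg z hz).deriv) hy hmid
  rw [← hconst, Real.rpow_neg hy.1.le]
  have := (Real.rpow_pos_of_pos hy.1 a).ne'
  field_simp

/-- If `u` solves the Euler equation `y² u'' = (a + b - 1) y u' - a b u`, whose indicial roots
are `a` and `b`, then `y u' - b u` is a multiple of `y ^ a`. -/
lemma euler_factor {a b y₀ : ℝ} (hy₀ : 0 < y₀) {u u' u'' : ℝ → ℝ}
    (hu : ∀ y ∈ Ioo (0 : ℝ) y₀, HasDerivAt u (u' y) y)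
    (hu' : ∀ y ∈ Ioo (0 : ℝ) y₀, HasDerivAt u' (u'' y) y)
    (hode : ∀ y ∈ Ioo (0 : ℝ) y₀,
      y ^ 2 * u'' y = (a + b - 1) * (y * u' y) - a * b * u y) :
    ∃ k : ℝ, ∀ y ∈ Ioo (0 : ℝ) y₀, y * u' y - b * u y = k * y ^ a := by
  refine eq_mul_rpow_of_euler (f' := fun y => 1 * u' y + y * u'' y - b * u' y) hy₀
    (fun y hy => ((hasDerivAt_id y).mul (hu' y hy)).sub ((hu y hy).const_mul b)) ?_
  intro y hy
  linear_combination hode y hy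

/-- If `φ̃` solves `λ φ̃(y) + (r − λ) y φ̃′(y) − δ y² φ̃″(y) = c y` on `(0, y₀)` and
`φ̃(y) → 0` as `y → 0⁺`, then `φ̃(y) = A₁ y^{B₁} + (c/r) y` for some constant `A₁`;
i.e. the coefficient of `y^{B₂}` must vanish. -/
theorem stmt_6 (r lam c mu sigma : ℝ) (hr : 0 < r) (hlam : 0 < lam) (hc : 0 < c)
    (hmu : r < mu) (hsigma : 0 < sigma)
    (δ : ℝ) (hδ : δ = (1 / 2) * ((mu - r) / sigma) ^ 2)
    (B₁ B₂ : ℝ)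
    (hB₁ : B₁ = (1 / (2 * δ)) *
      ((r - lam + δ) + Real.sqrt ((r - lam + δ) ^ 2 + 4 * lam * δ)))
    (hB₂ : B₂ = (1 / (2 * δ)) *
      ((r - lam + δ) - Real.sqrt ((r - lam + δ) ^ 2 + 4 * lam * δ)))
    (y₀ : ℝ) (hy₀ : 0 < y₀) (φ : ℝ → ℝ)
    (hdiff : ∀ y ∈ Ioo (0 : ℝ) y₀,
      DifferentiableAt ℝ φ y ∧ DifferentiableAt ℝ (deriv φ) y)
    (hode : ∀ y ∈ Ioo (0 : ℝ) y₀,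
      lam * φ y + (r - lam) * y * deriv φ y - δ * y ^ 2 * deriv (deriv φ) y = c * y)
    (hlim : Tendsto φ (nhdsWithin 0 (Ioi 0)) (nhds 0)) :
    ∃ A₁ : ℝ, ∀ y ∈ Ioo (0 : ℝ) y₀, φ y = A₁ * y ^ B₁ + (c / r) * y := by
  have hδ0 : 0 < δ := by
    have : 0 < (mu - r) / sigma := div_pos (by linarith) hsigma
    rw [hδ]
    positivity
  set s := Real.sqrt ((r - lam + δ) ^ 2 + 4 * lam * δ) with hs
  have hs2 : s ^ 2 = (r - lam + δ) ^ 2 + 4 * lam * δ := Real.sq_sqrt (by positivity)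
  have hslt : |r - lam + δ| < s := by
    rw [hs]
    apply Real.lt_sqrt_of_sq_lt
    rw [sq_abs]
    have : 0 < 4 * lam * δ := by positivity
    linarith
  obtain ⟨hs₁, hs₂⟩ := abs_lt.mp hslt
  have hB₁pos : 0 < B₁ := by
    rw [hB₁]
    exact mul_pos (by positivity) (by linarith)
  have hB₂neg : B₂ < 0 := by
    rw [hB₂]
    exact mul_neg_of_pos_of_neg (by positivity) (by linarith)
  have hsum : δ * (B₁ + B₂) = r - lam + δ := by
    rw [hB₁, hB₂]
    field_simp
    ring
  have hprod : δ * (B₁ * B₂) = -lam := by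
    rw [hB₁, hB₂]
    field_simp
    linear_combination -hs2
  have hu : ∀ y ∈ Ioo (0 : ℝ) y₀,
      HasDerivAt (fun y => φ y - c / r * y) (deriv φ y - c / r) y := fun y hy =>
    ((hdiff y hy).1.hasDerivAt.sub ((hasDerivAt_id y).const_mul (c / r))).congr_deriv (by simp)
  have hu' : ∀ y ∈ Ioo (0 : ℝ) y₀,
      HasDerivAt (fun y => deriv φ y - c / r) (deriv (deriv φ) y) y :=
    fun y hy => (hdiff y hy).2.hasDerivAt.sub_const _
  have hhom : ∀ y ∈ Ioo (0 : ℝ) y₀, y ^ 2 * deriv (deriv φ) y =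
      (B₁ + B₂ - 1) * (y * (deriv φ y - c / r)) - B₁ * B₂ * (φ y - c / r * y) := by
    intro y hy
    have hcr : c / r * r = c := div_mul_cancel₀ c hr.ne'
    apply mul_left_cancel₀ hδ0.ne'
    linear_combination -hode y hy - y * (deriv φ y - c / r) * hsum
      + (φ y - c / r * y) * hprod + y * hcr
  obtain ⟨k₁, hk₁⟩ := euler_factor hy₀ hu hu' hhom
  obtain ⟨k₂, hk₂⟩ := euler_factor (a := B₂) (b := B₁) hy₀ hu hu'
    (fun y hy => by rw [hhom y hy]; ring)
  have hgen : ∀ y ∈ Ioo (0 : ℝ) y₀,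
      (B₁ - B₂) * (φ y - c / r * y) = k₁ * y ^ B₁ - k₂ * y ^ B₂ := fun y hy => by
    linear_combination hk₁ y hy - hk₂ y hy
  have hpow : ∀ p : ℝ, 0 < p → Tendsto (fun y : ℝ => y ^ p) (𝓝[>] 0) (𝓝 0) := fun p hp => by
    have h := (Real.continuousAt_rpow_const 0 p (Or.inr hp.le)).tendsto
    rw [Real.zero_rpow hp.ne'] at h
    exact h.mono_left nhdsWithin_le_nhds
  have hid : Tendsto (fun y : ℝ => y) (𝓝[>] 0) (𝓝 0) := nhdsWithin_le_nhds
  have hk₂0 : k₂ = 0 := by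
    -- Multiplying the general solution by `y ^ (-B₂)` isolates `k₂`; the rest tends to `0`.
    have hzero : Tendsto (fun y : ℝ =>
        (k₁ * y ^ B₁ - (B₁ - B₂) * (φ y - c / r * y)) * y ^ (-B₂)) (𝓝[>] 0) (𝓝 0) := by
      simpa using (((hpow B₁ hB₁pos).const_mul k₁).sub
        ((hlim.sub (hid.const_mul (c / r))).const_mul (B₁ - B₂))).mul
          (hpow (-B₂) (neg_pos.mpr hB₂neg))
    refine tendsto_nhds_unique (tendsto_const_nhds.congr' ?_) hzero
    filter_upwards [Ioo_mem_nhdsGT hy₀] with y hy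
    rw [hgen y hy, Real.rpow_neg hy.1.le]
    have := (Real.rpow_pos_of_pos hy.1 B₂).ne'
    field_simp
    ring
  refine ⟨k₁ / (B₁ - B₂), fun y hy => ?_⟩
  have hne : B₁ - B₂ ≠ 0 := by linarith
  have h := hgen y hy
  rw [hk₂0, zero_mul, sub_zero] at h
  rw [div_mul_eq_mul_div, ← h, mul_div_cancel_left₀ _ hne]
  ring
end

section
/- Let M < x < c/r, and define F : (0, 1] → ℝ by F(t) = (B₁(1 − B₂)/(B₁ − B₂)) (c/r − M) t^{B₁ − 1} + (B₂(B₁ − 1)/(B₁ − B₂)) (c/r − M) t^{B₂ − 1}. Then F is strictly increasing on (0, 1], F(1) = c/r − M, F(t) → −∞ as t → 0⁺, and consequently there exists a unique t ∈ (0, 1) with F(t) = c/r − x. -/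
open Set Filter Topology

/-!
Since `1 < B₁` and `B₂ < 0`, the function has the form `F t = a * t ^ p + b * t ^ (-q)` with
`0 < a`, `b < 0`, `0 < p`, `0 < q`: both summands are strictly increasing on `(0, ∞)`, the first
tends to `0` and the second to `-∞` at `0⁺`. Also `F 1 = a + b = c / r - M`, because
`B₁ * (1 - B₂) + B₂ * (B₁ - 1) = B₁ - B₂`. The value `c / r - x` lies strictly below `F 1`, so the
intermediate value theorem gives a solution in `(0, 1)`, and strict monotonicity its uniqueness.
-/

/-- The discriminant equals both `(r - lam + δ) ^ 2 + 4 * lam * δ` and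
`(δ - r + lam) ^ 2 + 4 * r * δ`; the first form shows that the smaller root is negative, the
second that the larger root exceeds `1`. -/
lemma roots_bounds {r lam δ : ℝ} (hr : 0 < r) (hlam : 0 < lam) (hδ : 0 < δ) :
    1 < (1 / (2 * δ)) * ((r - lam + δ) + Real.sqrt ((r - lam + δ) ^ 2 + 4 * lam * δ)) ∧
    (1 / (2 * δ)) * ((r - lam + δ) - Real.sqrt ((r - lam + δ) ^ 2 + 4 * lam * δ)) < 0 := by
  have h1 : δ - r + lam < Real.sqrt ((r - lam + δ) ^ 2 + 4 * lam * δ) :=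
    Real.lt_sqrt_of_sq_lt (by nlinarith [mul_pos hr hδ])
  have h2 : r - lam + δ < Real.sqrt ((r - lam + δ) ^ 2 + 4 * lam * δ) :=
    Real.lt_sqrt_of_sq_lt (by nlinarith [mul_pos hlam hδ])
  constructor
  · rw [one_div_mul_eq_div, lt_div_iff₀ (by positivity)]
    linarith
  · exact mul_neg_of_pos_of_neg (by positivity) (by linarith)

lemma strictMonoOn_rpow_comb {a b p s : ℝ} (ha : 0 < a) (hb : b < 0) (hp : 0 < p) (hs : s < 0) :
    StrictMonoOn (fun t : ℝ => a * t ^ p + b * t ^ s) (Ioi 0) := by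
  intro u hu v _ huv
  have h1 : u ^ p < v ^ p := Real.rpow_lt_rpow (le_of_lt hu) huv hp
  have h2 : v ^ s < u ^ s := Real.rpow_lt_rpow_of_neg hu huv hs
  exact add_lt_add (mul_lt_mul_of_pos_left h1 ha) (mul_lt_mul_of_neg_left h2 hb)

lemma tendsto_rpow_comb {a b p s : ℝ} (hb : b < 0) (hp : 0 < p) (hs : s < 0) :
    Tendsto (fun t : ℝ => a * t ^ p + b * t ^ s) (𝓝[>] 0) atBot := by
  have h1 : Tendsto (fun t : ℝ => a * t ^ p) (𝓝[>] 0) (𝓝 (a * 0 ^ p)) :=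
    ((Real.continuousAt_rpow_const 0 p (Or.inr hp.le)).tendsto.mono_left
      nhdsWithin_le_nhds).const_mul a
  exact h1.add_atBot ((tendsto_rpow_neg_nhdsGT_zero hs).const_mul_atTop_of_neg hb)

/-- The function `F` determining the ratio `y_x/y_M` is strictly increasing on `(0, 1]`,
satisfies `F(1) = c/r − M`, tends to `−∞` as `t → 0⁺`, and hence there is a unique
`t ∈ (0, 1)` with `F(t) = c/r − x`. -/
theorem stmt_8 (r lam c mu sigma : ℝ) (hr : 0 < r) (hlam : 0 < lam) (hc : 0 < c)
    (hmu : r < mu) (hsigma : 0 < sigma)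
    (δ : ℝ) (hδ : δ = (1 / 2) * ((mu - r) / sigma) ^ 2)
    (B₁ B₂ : ℝ)
    (hB₁ : B₁ = (1 / (2 * δ)) *
      ((r - lam + δ) + Real.sqrt ((r - lam + δ) ^ 2 + 4 * lam * δ)))
    (hB₂ : B₂ = (1 / (2 * δ)) *
      ((r - lam + δ) - Real.sqrt ((r - lam + δ) ^ 2 + 4 * lam * δ)))
    (M x : ℝ) (hMx : M < x) (hx : x < c / r)
    (F : ℝ → ℝ)
    (hF : ∀ t : ℝ, F t =
      (B₁ * (1 - B₂) / (B₁ - B₂)) * (c / r - M) * t ^ (B₁ - 1) +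
      (B₂ * (B₁ - 1) / (B₁ - B₂)) * (c / r - M) * t ^ (B₂ - 1)) :
    StrictMonoOn F (Ioc (0 : ℝ) 1) ∧
    F 1 = c / r - M ∧
    Tendsto F (nhdsWithin 0 (Ioi 0)) atBot ∧
    ∃! t : ℝ, t ∈ Ioo (0 : ℝ) 1 ∧ F t = c / r - x := by
  have hδ0 : 0 < δ := by
    have : 0 < (mu - r) / sigma := div_pos (by linarith) hsigma
    rw [hδ]
    positivity
  obtain ⟨h1, h2⟩ := roots_bounds hr hlam hδ0
  rw [← hB₁] at h1
  rw [← hB₂] at h2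
  have hD : 0 < B₁ - B₂ := by linarith
  have hK : 0 < c / r - M := by linarith
  have ha : 0 < B₁ * (1 - B₂) / (B₁ - B₂) * (c / r - M) :=
    mul_pos (div_pos (mul_pos (by linarith) (by linarith)) hD) hK
  have hb : B₂ * (B₁ - 1) / (B₁ - B₂) * (c / r - M) < 0 :=
    mul_neg_of_neg_of_pos (div_neg_of_neg_of_pos (mul_neg_of_neg_of_pos h2 (by linarith)) hD) hK
  have hp : 0 < B₁ - 1 := by linarith
  have hs : B₂ - 1 < 0 := by linarith
  have hFeq : F = fun t : ℝ => B₁ * (1 - B₂) / (B₁ - B₂) * (c / r - M) * t ^ (B₁ - 1) +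
      B₂ * (B₁ - 1) / (B₁ - B₂) * (c / r - M) * t ^ (B₂ - 1) := funext hF
  have hmono : StrictMonoOn F (Ioi 0) := by
    rw [hFeq]
    exact strictMonoOn_rpow_comb ha hb hp hs
  have hone : F 1 = c / r - M := by
    rw [hF, Real.one_rpow, Real.one_rpow]
    field_simp
    ring
  have hlim : Tendsto F (𝓝[>] 0) atBot := by
    rw [hFeq]
    exact tendsto_rpow_comb hb hp hs
  refine ⟨hmono.mono Ioc_subset_Ioi_self, hone, hlim, ?_⟩
  obtain ⟨u, huF, hu⟩ := ((hlim.eventually_lt_atBot (c / r - x)).and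
    (Ioo_mem_nhdsGT (zero_lt_one (α := ℝ)))).exists
  have hcont : ContinuousOn F (Icc u 1) := by
    intro t ht
    have ht0 : t ≠ 0 := (hu.1.trans_le ht.1).ne'
    rw [hFeq]
    exact (((Real.continuousAt_rpow_const t _ (Or.inl ht0)).const_mul _).add
      ((Real.continuousAt_rpow_const t _ (Or.inl ht0)).const_mul _)).continuousWithinAt
  obtain ⟨t, ht, htF⟩ := intermediate_value_Ioo hu.2.le hcont
    (show c / r - x ∈ Ioo (F u) (F 1) from ⟨huF, by rw [hone]; linarith⟩)
  refine ⟨t, ⟨⟨hu.1.trans ht.1, ht.2⟩, htF⟩, ?_⟩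
  rintro v ⟨hv, hvF⟩
  exact hmono.injOn hv.1 (hu.1.trans ht.1) (hvF.trans htF.symm)
end

section
/- Let D₁ ∈ ℝ and D₂ < 0, and define φ̃(y) = D₁ y^{B₁} + D₂ y^{B₂} + (c/r) y + 1 for y > 0. Then for every y > 0 one has the strict inequality −y φ̃″(y) > (1/(p − 1)) (c/r − φ̃′(y)). (In terms of the original variables this says that the optimal investment strategy for the probability of ruin at death strictly exceeds ((μ − r)/σ²)(1/(p − 1))(c/r − w), the optimal strategy for the probability of lifetime ruin.) -/
/-!
Differentiating twice, the linear term `(c / r) y` contributes `c / r` to `φ'` and nothing to `φ''`,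
so the claim compares combinations of `y ^ (B₁ - 1)` and `y ^ (B₂ - 1)` only. The two square roots
in `p` and `B₁` have the same radicand, whence `(p - 1) (B₁ - 1) = 1`, that is `1 / (p - 1) = B₁ - 1`.
With this coefficient the `D₁` terms cancel and the difference of the two sides is
`D₂ B₂ (B₁ - B₂) y ^ (B₂ - 1)`, which is positive because `D₂ < 0` and `B₂ < 0 < B₁ - B₂`.
-/


/-- For `φ̃(y) = D₁ y^{B₁} + D₂ y^{B₂} + (c/r) y + 1` with `D₂ < 0`, one has
`−y φ̃″(y) > (1/(p − 1))(c/r − φ̃′(y))` for every `y > 0`; i.e. the optimal investment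
strategy for the probability of ruin at death strictly exceeds the one for the
probability of lifetime ruin. -/
theorem stmt_9 (r lam c mu sigma : ℝ) (hr : 0 < r) (hlam : 0 < lam) (hc : 0 < c)
    (hmu : r < mu) (hsigma : 0 < sigma)
    (δ : ℝ) (hδ : δ = (1 / 2) * ((mu - r) / sigma) ^ 2)
    (p : ℝ)
    (hp : p = (1 / (2 * r)) *
      ((r + lam + δ) + Real.sqrt ((r + lam + δ) ^ 2 - 4 * r * lam)))
    (B₁ B₂ : ℝ)
    (hB₁ : B₁ = (1 / (2 * δ)) *
      ((r - lam + δ) + Real.sqrt ((r - lam + δ) ^ 2 + 4 * lam * δ)))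
    (hB₂ : B₂ = (1 / (2 * δ)) *
      ((r - lam + δ) - Real.sqrt ((r - lam + δ) ^ 2 + 4 * lam * δ)))
    (D₁ D₂ : ℝ) (hD₂ : D₂ < 0)
    (φ : ℝ → ℝ)
    (hφ : ∀ y : ℝ, φ y = D₁ * y ^ B₁ + D₂ * y ^ B₂ + (c / r) * y + 1) :
    ∀ y : ℝ, 0 < y →
      -y * deriv (deriv φ) y > (1 / (p - 1)) * (c / r - deriv φ y) := by
  intro y hy
  have hδ0 : 0 < δ := by
    have : 0 < (mu - r) / sigma := div_pos (sub_pos.2 hmu) hsigma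
    rw [hδ]; positivity
  -- Both square roots have the same radicand, so they are one number `S`.
  have hdisc : (r + lam + δ) ^ 2 - 4 * r * lam = (r - lam + δ) ^ 2 + 4 * lam * δ := by ring
  rw [hdisc] at hp
  have hld : 0 < lam * δ := mul_pos hlam hδ0
  have hpos : 0 < (r - lam + δ) ^ 2 + 4 * lam * δ := by
    nlinarith [sq_nonneg (r - lam + δ)]
  have hSpos := Real.sqrt_pos.2 hpos
  have hSsq := Real.sq_sqrt hpos.le
  set S := Real.sqrt ((r - lam + δ) ^ 2 + 4 * lam * δ) with hS
  have hprod : (p - 1) * (B₁ - 1) = 1 := by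
    rw [hp, hB₁]
    field_simp
    linear_combination hSsq
  have hinv : 1 / (p - 1) = B₁ - 1 :=
    (eq_div_of_mul_eq (left_ne_zero_of_mul_eq_one hprod) (by linarith)).symm
  have hB₂neg : B₂ < 0 := by
    have hlt : r - lam + δ < S := lt_of_pow_lt_pow_left₀ 2 hSpos.le (by linarith)
    rw [hB₂]
    exact mul_neg_of_pos_of_neg (by positivity) (by linarith)
  have hB : 0 < B₁ - B₂ := by
    have : B₁ - B₂ = S / δ := by rw [hB₁, hB₂]; field_simp; ring
    rw [this]; positivity
  have h1 : ∀ x : ℝ, 0 < x → HasDerivAt φ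
      (D₁ * (B₁ * x ^ (B₁ - 1)) + D₂ * (B₂ * x ^ (B₂ - 1)) + c / r) x := by
    intro x hx
    have e : φ = fun y => D₁ * y ^ B₁ + D₂ * y ^ B₂ + (c / r) * y + 1 := funext hφ
    rw [e]
    have := ((((Real.hasDerivAt_rpow_const (p := B₁) (Or.inl hx.ne')).const_mul D₁).add
      ((Real.hasDerivAt_rpow_const (p := B₂) (Or.inl hx.ne')).const_mul D₂)).add
      ((hasDerivAt_id x).const_mul (c / r))).add_const 1
    simpa using this
  have h2 : HasDerivAt (deriv φ)
      (D₁ * (B₁ * ((B₁ - 1) * y ^ (B₁ - 1 - 1))) + D₂ * (B₂ * ((B₂ - 1) * y ^ (B₂ - 1 - 1)))) y := by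
    have := ((((Real.hasDerivAt_rpow_const (p := B₁ - 1) (Or.inl hy.ne')).const_mul B₁).const_mul
      D₁).add (((Real.hasDerivAt_rpow_const (p := B₂ - 1) (Or.inl hy.ne')).const_mul B₂).const_mul
      D₂)).add_const (c / r)
    refine this.congr_of_eventuallyEq ?_
    -- The formula for `φ'` holds only on `x > 0`, a neighbourhood of `y`.
    filter_upwards [lt_mem_nhds hy] with x hx
    simpa using (h1 x hx).deriv
  rw [h2.deriv, (h1 y hy).deriv, hinv]
  have e1 : y * y ^ (B₁ - 1 - 1) = y ^ (B₁ - 1) := by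
    rw [Real.rpow_sub_one hy.ne' (B₁ - 1)]; field_simp
  have e2 : y * y ^ (B₂ - 1 - 1) = y ^ (B₂ - 1) := by
    rw [Real.rpow_sub_one hy.ne' (B₂ - 1)]; field_simp
  have key : 0 < D₂ * B₂ * (B₁ - B₂) * y ^ (B₂ - 1) :=
    mul_pos (mul_pos (mul_pos_of_neg_of_neg hD₂ hB₂neg) hB) (Real.rpow_pos_of_pos hy _)
  refine sub_pos.1 (key.trans_eq ?_)
  linear_combination D₁ * B₁ * (B₁ - 1) * e1 + D₂ * B₂ * (B₂ - 1) * e2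
end

section
/- Let p > 1, r > 0, c > 0, and let w < c/r and a < c/r. Then the improper integral ∫_{−∞}^{a} ((c − r y)^{−p}) dy converges and ∫_{−∞}^{a} ((c − r w)/(c − r y))^p dy = ((c − r w)/(c − r a))^p · (c − r a)/(r(p − 1)). In particular, with a = min(m, x), the minimum expected lifetime shortfall satisfies V(w, m; x) = (x − m)₊ + ((c − r w)/(c − r·min(m, x)))^p · (c − r·min(m, x))/(r(p − 1)). -/
/-!
Writing `((c - r w)/(c - r y))^p = (c - r w)^p (c - r y)^(-p)` for `y ≤ a < c/r`, convergence reduces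
to that of `∫ (t + c/r)^(-p) dt` near `+∞` (reflect `y = -t` and factor out `r`), which holds as
`p > 1` (`integrableOn_sub_mul_rpow`). The value then follows from the fundamental theorem of calculus on `(-∞, a]`: the function
`(c - r y)^(1 - p) / (r (p - 1))` is an antiderivative of `(c - r y)^(-p)` vanishing at `-∞`
(`integral_sub_mul_rpow`).
-/

open Set MeasureTheory
open Filter Topology

lemma sub_mul_pos_of_le {r c a y : ℝ} (hr : 0 < r) (ha : a < c / r) (hy : y ≤ a) :
    0 < c - r * y := by
  have h := (lt_div_iff₀ hr).1 (hy.trans_lt ha)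
  linarith

lemma integrableOn_sub_mul_rpow {r c p a : ℝ} (hr : 0 < r) (hp : 1 < p) (ha : a < c / r) :
    IntegrableOn (fun y : ℝ => (c - r * y) ^ (-p)) (Iic a) := by
  have h1 : IntegrableOn (fun t : ℝ => (t + c / r) ^ (-p)) (Ioi (-a)) :=
    integrableOn_add_rpow_Ioi_of_lt (by linarith) (by linarith)
  have h2 : IntegrableOn (fun y : ℝ => (-y + c / r) ^ (-p)) (Iic a) := by
    rw [integrableOn_Iic_iff_integrableOn_Iio]
    exact h1.comp_neg_Iio
  refine IntegrableOn.congr_fun (h2.const_mul (r ^ (-p))) (fun y hy => ?_) measurableSet_Iic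
  have hpos := sub_mul_pos_of_le hr ha hy
  have e : c - r * y = r * (-y + c / r) := by field_simp; ring
  have hpos' : 0 < -y + c / r := by
    rw [e] at hpos
    exact pos_of_mul_pos_right hpos hr.le
  rw [e, Real.mul_rpow hr.le hpos'.le]

lemma integral_sub_mul_rpow {r c p a : ℝ} (hr : 0 < r) (hp : 1 < p) (ha : a < c / r) :
    ∫ y in Iic a, (c - r * y) ^ (-p) = (c - r * a) ^ (1 - p) / (r * (p - 1)) := by
  have hp' : p - 1 ≠ 0 := by linarith
  have hderiv : ∀ y ∈ Iic a,
      HasDerivAt (fun y : ℝ => (c - r * y) ^ (1 - p) / (r * (p - 1))) ((c - r * y) ^ (-p)) y := by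
    intro y hy
    have hpos := sub_mul_pos_of_le hr ha hy
    have h0 : HasDerivAt (fun y : ℝ => c - r * y) (-(r * 1)) y :=
      ((hasDerivAt_id y).const_mul r).const_sub c
    convert! (h0.rpow_const (p := 1 - p) (Or.inl hpos.ne')).div_const (r * (p - 1)) using 1
    rw [show 1 - p - 1 = -p by ring]
    field_simp
    ring
  have hlim : Tendsto (fun y : ℝ => (c - r * y) ^ (1 - p) / (r * (p - 1))) atBot (𝓝 0) := by
    have h1 : Tendsto (fun y : ℝ => c - r * y) atBot atTop :=
      tendsto_atTop_add_const_left _ c (tendsto_neg_atBot_atTop.comp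
        (tendsto_id.const_mul_atBot hr))
    have h2 := ((tendsto_rpow_neg_atTop (sub_pos.2 hp)).comp h1).div_const (r * (p - 1))
    simpa only [neg_sub, zero_div, Function.comp_def] using h2
  rw [integral_Iic_of_hasDerivAt_of_tendsto' hderiv (integrableOn_sub_mul_rpow hr hp ha) hlim,
    sub_zero]

/-- For `p > 1`, `w < c/r`, `a < c/r`, the improper integral
`∫_{−∞}^{a} ((c − r w)/(c − r y))^p dy` converges and equals
`((c − r w)/(c − r a))^p (c − r a)/(r(p − 1))`.  In particular, with `a = min(m, x)`,
the minimum expected lifetime shortfall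
`V(w, m; x) = (x − m)₊ + ∫_{−∞}^{min(m,x)} ((c − r w)/(c − r y))^p dy` equals
`(x − m)₊ + ((c − r w)/(c − r min(m,x)))^p (c − r min(m,x))/(r(p − 1))`. -/
theorem stmt_11 (r c p : ℝ) (hr : 0 < r) (hc : 0 < c) (hp : 1 < p)
    (w a : ℝ) (hw : w < c / r) (ha : a < c / r) :
    IntegrableOn (fun y : ℝ => ((c - r * w) / (c - r * y)) ^ p) (Iic a) volume ∧
    (∫ y in Iic a, ((c - r * w) / (c - r * y)) ^ p)
      = ((c - r * w) / (c - r * a)) ^ p * ((c - r * a) / (r * (p - 1))) ∧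
    ∀ m x V : ℝ, min m x = a →
      V = max (x - m) 0 + ∫ y in Iic (min m x), ((c - r * w) / (c - r * y)) ^ p →
      V = max (x - m) 0 +
        ((c - r * w) / (c - r * min m x)) ^ p * ((c - r * min m x) / (r * (p - 1))) := by
  have hA := sub_mul_pos_of_le hr ha le_rfl
  have hW := sub_mul_pos_of_le hr hw le_rfl
  have hcongr : EqOn (fun y : ℝ => (c - r * w) ^ p * (c - r * y) ^ (-p))
      (fun y : ℝ => ((c - r * w) / (c - r * y)) ^ p) (Iic a) := by
    intro y hy
    have hY := sub_mul_pos_of_le hr ha hy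
    dsimp only
    rw [Real.div_rpow hW.le hY.le, Real.rpow_neg hY.le, div_eq_mul_inv]
  have hval : (∫ y in Iic a, ((c - r * w) / (c - r * y)) ^ p)
      = ((c - r * w) / (c - r * a)) ^ p * ((c - r * a) / (r * (p - 1))) := by
    rw [← setIntegral_congr_fun measurableSet_Iic hcongr, integral_const_mul,
      integral_sub_mul_rpow hr hp ha, Real.div_rpow hW.le hA.le, Real.rpow_sub hA, Real.rpow_one]
    ring
  refine ⟨IntegrableOn.congr_fun ((integrableOn_sub_mul_rpow hr hp ha).const_mul _) hcongr
    measurableSet_Iic,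
    hval, ?_⟩
  rintro m x V rfl hV
  rw [hV, hval]
end

section
/- Let x < c/r and let f : ℝ → ℝ be continuously differentiable, non-increasing, and bounded, with f(y) = 0 for all y ≥ x. For m ≤ w < c/r define h(w, m) = f(m) − ∫_{−∞}^{m} f′(y) ((c − r w)/(c − r y))^p dy (the integral converges absolutely). Then for each fixed m and every w ∈ (m, c/r), the function h satisfies the Hamilton–Jacobi–Bellman inequality λ (h(w, m) − f(m)) ≤ (r w − c) ∂_w h(w, m) + (μ − r) π ∂_w h(w, m) + (1/2) σ² π² ∂²_{ww} h(w, m) for every π ∈ ℝ, with equality when π = π^V(w) = ((μ − r)/σ²) (1/(p − 1)) (c/r − w). -/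
open Set MeasureTheory

/-!
Put `U = c - r w`. The factor `U ^ p` does not depend on the integration variable, so for fixed `m`
`h w m - f m = A * U ^ p` with `A = -∫_{-∞}^m f'(y) (c - r y)^{-p} dy ≥ 0`, the sign coming from
`f' ≤ 0`. The integral converges absolutely because `f'` is integrable (`f` is monotone and bounded)
and the kernel takes values in `[0, 1]`.

After substituting `U ^ p`, the right side of the HJB inequality minus its left side is a quadratic
polynomial in the investment `q`. Since `p > 1` is a root of `r p² - (r + λ + δ) p + λ = 0`,
completing the square leaves no constant term:
`(1/2) A σ² p (p - 1) U ^ (p - 2) (r q - (μ - r) U / (σ² (p - 1)))²`.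
This is nonnegative and vanishes at the candidate optimal investment.
-/

/-- The defining quadratic equation of `p`, and `1 < p`: the quadratic equals `-δ < 0` at `1`, and
`p` is its larger root. -/
lemma p_spec {r lam δ p : ℝ} (hr : 0 < r) (hδ : 0 < δ)
    (hp : p = (1 / (2 * r)) *
      ((r + lam + δ) + Real.sqrt ((r + lam + δ) ^ 2 - 4 * r * lam))) :
    r * p ^ 2 - (r + lam + δ) * p + lam = 0 ∧ 1 < p := by
  have hD : (r - lam - δ) ^ 2 < (r + lam + δ) ^ 2 - 4 * r * lam := by
    nlinarith [mul_pos hr hδ]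
  set s := Real.sqrt ((r + lam + δ) ^ 2 - 4 * r * lam) with hs
  have hs2 : s ^ 2 = (r + lam + δ) ^ 2 - 4 * r * lam :=
    Real.sq_sqrt ((sq_nonneg _).trans hD.le)
  have hps : 2 * r * p = r + lam + δ + s := by rw [hp]; field_simp
  have hlt : r - lam - δ < s := Real.lt_sqrt_of_sq_lt hD
  constructor
  · have : 4 * r * (r * p ^ 2 - (r + lam + δ) * p + lam) = 0 := by
      have hs' : s = 2 * r * p - (r + lam + δ) := by linarith
      rw [hs'] at hs2
      linarith
    exact (mul_eq_zero.mp this).resolve_left (by positivity)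
  · by_contra! hle
    nlinarith [mul_le_mul_of_nonneg_left hle hr.le]

/-- The integral of `|f'|` over `[a, m]` telescopes to `f a - f m`, which is bounded. -/
lemma integrableOn_deriv_of_antitone {f : ℝ → ℝ} (hf₁ : ContDiff ℝ 1 f) (hf₂ : Antitone f)
    (hf₃ : ∃ C : ℝ, ∀ y : ℝ, |f y| ≤ C) (m : ℝ) : IntegrableOn (deriv f) (Iic m) := by
  obtain ⟨C, hC⟩ := hf₃
  have hc : Continuous (deriv f) := hf₁.continuous_deriv le_rfl
  refine integrableOn_Iic_of_intervalIntegral_norm_bounded (l := Filter.atBot) (a := id) (2 * C) m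
    (fun i => (hc.integrableOn_Icc).mono_set Ioc_subset_Icc_self) Filter.tendsto_id ?_
  refine Filter.Eventually.of_forall fun a => ?_
  have h1 : ∀ y, ‖deriv f y‖ = -deriv f y := fun y => by
    rw [Real.norm_eq_abs, abs_of_nonpos hf₂.deriv_nonpos]
  simp only [h1, id]
  rw [intervalIntegral.integral_neg, intervalIntegral.integral_deriv_eq_sub
    (fun y _ => (hf₁.differentiable one_ne_zero) y) (hc.intervalIntegrable _ _)]
  linarith [neg_abs_le (f m), le_abs_self (f a), hC m, hC a]

lemma integrableOn_kernel {f : ℝ → ℝ} {r c p m w : ℝ} (hr : 0 < r) (hp : 0 ≤ p)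
    (hf : IntegrableOn (deriv f) (Iic m)) (hmw : m ≤ w) (hw : w < c / r) :
    IntegrableOn (fun y : ℝ => deriv f y * ((c - r * w) / (c - r * y)) ^ p) (Iic m) := by
  have hU : 0 < c - r * w := by have := (lt_div_iff₀' hr).mp hw; linarith
  refine Integrable.mul_bdd (c := 1) hf ?_ ?_
  · exact Measurable.aestronglyMeasurable (by fun_prop)
  · refine (ae_restrict_mem measurableSet_Iic).mono fun y hy => ?_
    have hle : c - r * w ≤ c - r * y := by
      have := mul_le_mul_of_nonneg_left (le_trans hy hmw) hr.le
      linarith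
    have hV : 0 < c - r * y := hU.trans_le hle
    have h0 : 0 ≤ (c - r * w) / (c - r * y) := by positivity
    rw [Real.norm_eq_abs, abs_of_nonneg (Real.rpow_nonneg h0 _)]
    exact Real.rpow_le_one h0 ((div_le_one hV).mpr hle) hp

lemma integral_kernel {f : ℝ → ℝ} {r c p m w : ℝ} (hr : 0 < r) (hmw : m ≤ w) (hw : w < c / r) :
    ∫ y in Iic m, deriv f y * ((c - r * w) / (c - r * y)) ^ p =
      (∫ y in Iic m, deriv f y / (c - r * y) ^ p) * (c - r * w) ^ p := by
  have hU : 0 < c - r * w := by have := (lt_div_iff₀' hr).mp hw; linarith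
  rw [← integral_mul_const]
  refine setIntegral_congr_fun measurableSet_Iic fun y hy => ?_
  have hV : 0 < c - r * y := by
    have := mul_le_mul_of_nonneg_left (le_trans hy hmw) hr.le
    linarith
  rw [Real.div_rpow hU.le hV.le]
  ring

lemma hasDerivAt_power {r c q w : ℝ} (hU : 0 < c - r * w) :
    HasDerivAt (fun w' => (c - r * w') ^ q) (-(r * q * (c - r * w) ^ (q - 1))) w := by
  have h1 : HasDerivAt (fun w' => c - r * w') (-r) w := by
    simpa using ((hasDerivAt_id w).const_mul r).const_sub c
  convert h1.rpow_const (p := q) (Or.inl hU.ne') using 1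
  ring

/-- Completing the square in the HJB operator, where `V` stands for `U ^ (p - 2)`. -/
lemma hjb_square {r lam mu sigma δ p A U V q : ℝ} (hsigma : 0 < sigma)
    (hδ : δ = (1 / 2) * ((mu - r) / sigma) ^ 2)
    (hquad : r * p ^ 2 - (r + lam + δ) * p + lam = 0) (hp : 1 < p) :
    (-U) * (-(A * (r * p * (V * U)))) + (mu - r) * q * (-(A * (r * p * (V * U)))) +
        (1 / 2) * sigma ^ 2 * q ^ 2 * (A * (r * p * (r * (p - 1) * V))) =
      lam * (A * (V * U ^ 2)) + (1 / 2) * A * sigma ^ 2 * p * (p - 1) * V *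
        (r * q - (mu - r) * U / (sigma ^ 2 * (p - 1))) ^ 2 := by
  have hp1 : p - 1 ≠ 0 := by linarith
  have hlam' : lam = r * p - p * δ / (p - 1) := by
    field_simp
    linarith
  rw [hlam', hδ]
  field_simp
  ring

/-- The candidate value function
`h(w, m) = f(m) − ∫_{−∞}^{m} f′(y)((c − r w)/(c − r y))^p dy` (the integral converging
absolutely) satisfies, for each fixed `m` and every `w ∈ (m, c/r)`, the HJB inequality
for every `π ∈ ℝ`, with equality when `π = π^V(w) = ((μ − r)/σ²)(1/(p − 1))(c/r − w)`. -/
theorem stmt_12 (r lam c mu sigma : ℝ) (hr : 0 < r) (hlam : 0 < lam) (hc : 0 < c)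
    (hmu : r < mu) (hsigma : 0 < sigma)
    (δ : ℝ) (hδ : δ = (1 / 2) * ((mu - r) / sigma) ^ 2)
    (p : ℝ)
    (hp : p = (1 / (2 * r)) *
      ((r + lam + δ) + Real.sqrt ((r + lam + δ) ^ 2 - 4 * r * lam)))
    (x : ℝ) (hx : x < c / r)
    (f : ℝ → ℝ) (hf₁ : ContDiff ℝ 1 f) (hf₂ : Antitone f)
    (hf₃ : ∃ C : ℝ, ∀ y : ℝ, |f y| ≤ C)
    (hf₄ : ∀ y : ℝ, x ≤ y → f y = 0)
    (h : ℝ → ℝ → ℝ)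
    (hh : ∀ w m : ℝ, m ≤ w → w < c / r →
      h w m = f m - ∫ y in Iic m, deriv f y * ((c - r * w) / (c - r * y)) ^ p) :
    ∀ m : ℝ, ∀ w ∈ Ioo m (c / r),
      IntegrableOn (fun y : ℝ => deriv f y * ((c - r * w) / (c - r * y)) ^ p)
        (Iic m) volume ∧
      (∀ pp : ℝ,
        lam * (h w m - f m) ≤
          (r * w - c) * deriv (fun w' => h w' m) w +
          (mu - r) * pp * deriv (fun w' => h w' m) w +
          (1 / 2) * sigma ^ 2 * pp ^ 2 * deriv (deriv (fun w' => h w' m)) w) ∧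
      lam * (h w m - f m) =
        (r * w - c) * deriv (fun w' => h w' m) w +
        (mu - r) * (((mu - r) / sigma ^ 2) * (1 / (p - 1)) * (c / r - w)) *
          deriv (fun w' => h w' m) w +
        (1 / 2) * sigma ^ 2 * (((mu - r) / sigma ^ 2) * (1 / (p - 1)) * (c / r - w)) ^ 2 *
          deriv (deriv (fun w' => h w' m)) w := by
  intro m w hw
  obtain ⟨hmw, hwc⟩ := hw
  have hδ0 : 0 < δ := by
    have : 0 < mu - r := by linarith
    rw [hδ]; positivity
  obtain ⟨hquad, hp1⟩ := p_spec hr hδ0 hp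
  have hf' := integrableOn_deriv_of_antitone hf₁ hf₂ hf₃ m
  refine ⟨integrableOn_kernel hr (by linarith) hf' hmw.le hwc, ?_⟩
  have hpos : ∀ v, v < c / r → 0 < c - r * v := fun v hv => by
    have := (lt_div_iff₀' hr).mp hv; linarith
  obtain ⟨A, hA⟩ : ∃ A, A = -∫ y in Iic m, deriv f y / (c - r * y) ^ p := ⟨_, rfl⟩
  have hA0 : 0 ≤ A := by
    rw [hA, neg_nonneg]
    refine setIntegral_nonpos measurableSet_Iic fun y hy => ?_
    exact div_nonpos_of_nonpos_of_nonneg hf₂.deriv_nonpos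
      (Real.rpow_nonneg (hpos y ((le_trans hy hmw.le).trans_lt hwc)).le _)
  have hform : ∀ v ∈ Ioo m (c / r), h v m = f m + A * (c - r * v) ^ p := fun v hv => by
    rw [hh v m hv.1.le hv.2, integral_kernel hr hv.1.le hv.2, hA]; ring
  have hd : ∀ v ∈ Ioo m (c / r),
      deriv (fun w' => h w' m) v = -(A * (r * p * (c - r * v) ^ (p - 1))) := fun v hv => by
    have heq : (fun w' => h w' m) =ᶠ[nhds v] fun w' => f m + A * (c - r * w') ^ p :=
      Filter.mem_of_superset (Ioo_mem_nhds hv.1 hv.2) hform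
    rw [heq.deriv_eq, (((hasDerivAt_power (hpos v hv.2)).const_mul A).const_add (f m)).deriv]
    ring
  have hdd : deriv (deriv (fun w' => h w' m)) w =
      A * (r * p * (r * (p - 1) * (c - r * w) ^ (p - 2))) := by
    have heq : deriv (fun w' => h w' m) =ᶠ[nhds w]
        fun w' => (-(A * (r * p))) * (c - r * w') ^ (p - 1) :=
      Filter.mem_of_superset (Ioo_mem_nhds hmw hwc) fun v hv => by
        rw [mem_ofPred_eq, hd v hv]; ring
    rw [heq.deriv_eq, ((hasDerivAt_power (hpos w hwc)).const_mul _).deriv,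
      show p - 1 - 1 = p - 2 by ring]
    ring
  have hU := hpos w hwc
  rw [hform w ⟨hmw, hwc⟩, hd w ⟨hmw, hwc⟩, hdd]
  have e1 : (c - r * w) ^ (p - 1) = (c - r * w) ^ (p - 2) * (c - r * w) := by
    rw [← Real.rpow_add_one hU.ne']; congr 1; ring
  have e2 : (c - r * w) ^ p = (c - r * w) ^ (p - 2) * (c - r * w) ^ 2 := by
    rw [← Real.rpow_natCast, ← Real.rpow_add hU]; congr 1; push_cast; ring
  have hV : 0 < (c - r * w) ^ (p - 2) := Real.rpow_pos_of_pos hU _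
  have hneg : r * w - c = -(c - r * w) := by ring
  rw [e1, e2, hneg, add_sub_cancel_left]
  have hp1' : 0 < p - 1 := by linarith
  constructor
  · intro q
    rw [hjb_square hsigma hδ hquad hp1]
    have : 0 < p := by linarith
    have := sq_nonneg (r * q - (mu - r) * (c - r * w) / (sigma ^ 2 * (p - 1)))
    exact le_add_of_nonneg_right (by positivity)
  · rw [hjb_square hsigma hδ hquad hp1]
    have : r * ((mu - r) / sigma ^ 2 * (1 / (p - 1)) * (c / r - w)) -
        (mu - r) * (c - r * w) / (sigma ^ 2 * (p - 1)) = 0 := by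
      field_simp
      ring
    rw [this]
    ring
end

section
/- Let x < c/r and let f : ℝ → ℝ be continuously differentiable, non-increasing, and bounded, with f(y) = 0 for all y ≥ x. For m ≤ w < c/r define h(w, m) = f(m) − ∫_{−∞}^{m} f′(y) ((c − r w)/(c − r y))^p dy. Then: (i) for each fixed w with m < w < c/r, h is differentiable in m with ∂_m h(w, m) = f′(m) (1 − ((c − r w)/(c − r m))^p); (ii) ∂_m h(m, m) = 0 for every m < c/r; and (iii) for each fixed m, h(w, m) → f(m) and ∂_w h(w, m) → 0 as w → (c/r)⁻. -/
/-!
For `m ≤ w < c/r` and `y ≤ m` both `c - r w` and `c - r y` are positive, so the kernel factors and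
`h w m = f m - (c - r w)^p * G m` with `G m = ∫_{y ≤ m} f'(y) / (c - r y)^p dy`, a function of `m`
alone. Since `f` is monotone and bounded, `f'` is integrable at `-∞`, and the weight is bounded
there, so `G` is a genuine integral and `G' m = f'(m) / (c - r m)^p` by the fundamental theorem of
calculus. This gives the derivative in `m`, which vanishes at `m = w`. In the variable `w` the only
dependence is through `(c - r w)^p`, whose value and derivative `-p r (c - r w)^(p-1)` both tend to
zero at `c/r` because `p > 1`; the latter is where `μ ≠ r`, that is `δ > 0`, enters.
-/

open Set Filter Topology MeasureTheory

/-- The exponent exceeds `1`: the discriminant is strictly larger than `(r - lam)^2`, and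
`r + lam + |r - lam| ≥ 2 r`. -/
lemma one_lt_exponent {r lam δ : ℝ} (hr : 0 < r) (hlam : 0 < lam) (hδ : 0 < δ) :
    1 < (1 / (2 * r)) * ((r + lam + δ) + Real.sqrt ((r + lam + δ) ^ 2 - 4 * r * lam)) := by
  have hs : r - lam ≤ Real.sqrt ((r + lam + δ) ^ 2 - 4 * r * lam) := by
    apply Real.le_sqrt_of_sq_le
    nlinarith [mul_pos hr hδ, mul_pos hlam hδ, sq_nonneg δ]
  rw [one_div_mul_eq_div, lt_div_iff₀ (by positivity)]
  linarith

lemma integrableOn_Iic_deriv_of_bounded_antitone {f : ℝ → ℝ} (hf₁ : ContDiff ℝ 1 f)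
    (hf₂ : Antitone f) (hf₃ : ∃ C : ℝ, ∀ y : ℝ, |f y| ≤ C) (b : ℝ) :
    IntegrableOn (deriv f) (Iic b) := by
  obtain ⟨C, hC⟩ := hf₃
  have hcont : Continuous (deriv f) := hf₁.continuous_deriv le_rfl
  have hdiff : Differentiable ℝ f := hf₁.differentiable one_ne_zero
  refine integrableOn_Iic_of_intervalIntegral_norm_bounded (l := atBot) (a := id) (2 * C) b
    (fun i => hcont.integrableOn_Ioc) tendsto_id (Eventually.of_forall fun i => ?_)
  have hnorm : ∀ y, ‖deriv f y‖ = -deriv f y := fun y => by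
    rw [Real.norm_eq_abs, abs_of_nonpos hf₂.deriv_nonpos]
  simp only [hnorm, id, intervalIntegral.integral_neg]
  rw [intervalIntegral.integral_deriv_eq_sub (fun y _ => hdiff y) (hcont.intervalIntegrable _ _)]
  linarith [(abs_le.1 (hC i)).2, (abs_le.1 (hC b)).1]

/-- On `(-∞, m]` with `m < c/r` the weight `(c - r y)^p` is bounded below by `(c - r m)^p > 0`. -/
lemma integrableOn_weighted {r c p : ℝ} (hr : 0 < r) (hp : 0 < p) {g : ℝ → ℝ} {m : ℝ}
    (hm : m < c / r) (hg : IntegrableOn g (Iic m)) :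
    IntegrableOn (fun y => g y / (c - r * y) ^ p) (Iic m) := by
  have hm' : 0 < c - r * m := by linarith [(lt_div_iff₀ hr).1 hm]
  simp only [div_eq_mul_inv]
  refine Integrable.mul_bdd (c := ((c - r * m) ^ p)⁻¹) hg ?_ ?_
  · have : Measurable fun y : ℝ => ((c - r * y) ^ p)⁻¹ := by fun_prop
    exact this.aestronglyMeasurable
  · filter_upwards [ae_restrict_mem measurableSet_Iic] with y hy
    have hle : c - r * m ≤ c - r * y := by
      have := mul_le_mul_of_nonneg_left (mem_Iic.1 hy) hr.le
      linarith
    have hpos : 0 < c - r * y := hm'.trans_le hle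
    rw [Real.norm_of_nonneg (by positivity)]
    gcongr

lemma hasDerivAt_integral_weighted {r c p : ℝ} (hr : 0 < r) (hp : 0 < p) {g : ℝ → ℝ}
    (hgc : Continuous g) (hg : ∀ b, IntegrableOn g (Iic b)) {m : ℝ} (hm : m < c / r) :
    HasDerivAt (fun m' => ∫ y in Iic m', g y / (c - r * y) ^ p) (g m / (c - r * m) ^ p) m := by
  have hm' : 0 < c - r * m := by linarith [(lt_div_iff₀ hr).1 hm]
  have hF : ∀ b, b < c / r → IntegrableOn (fun y => g y / (c - r * y) ^ p) (Iic b) :=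
    fun b hb => integrableOn_weighted hr hp hb (hg b)
  have hmeas : Measurable fun y => g y / (c - r * y) ^ p := by
    have := hgc.measurable
    fun_prop
  have hcont : ContinuousAt (fun y => g y / (c - r * y) ^ p) m := by
    refine hgc.continuousAt.div (ContinuousAt.rpow_const (by fun_prop) (Or.inl hm'.ne')) ?_
    positivity
  have h1 : HasDerivAt (fun u => ∫ y in m..u, g y / (c - r * y) ^ p)
      (g m / (c - r * m) ^ p) m :=
    intervalIntegral.integral_hasDerivAt_right (by simp)
      hmeas.stronglyMeasurable.stronglyMeasurableAtFilter hcont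
  refine (h1.const_add (∫ y in Iic m, g y / (c - r * y) ^ p)).congr_of_eventuallyEq ?_
  filter_upwards [Iio_mem_nhds hm] with u hu
  rw [← intervalIntegral.integral_Iic_sub_Iic (hF m hm) (hF u hu)]
  ring

/-- Smoothness and boundary conditions for
`h(w, m) = f(m) − ∫_{−∞}^{m} f′(y)((c − r w)/(c − r y))^p dy`:
(i) for `m < w < c/r`, `h` is differentiable in `m` with
`∂_m h(w, m) = f′(m)(1 − ((c − r w)/(c − r m))^p)`;
(ii) the (left) derivative `∂_m h(m, m) = 0`;
(iii) `h(w, m) → f(m)` and `∂_w h(w, m) → 0` as `w → (c/r)⁻`. -/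
theorem stmt_13 (r lam c mu sigma : ℝ) (hr : 0 < r) (hlam : 0 < lam) (hc : 0 < c)
    (hmu : r < mu) (hsigma : 0 < sigma)
    (δ : ℝ) (hδ : δ = (1 / 2) * ((mu - r) / sigma) ^ 2)
    (p : ℝ)
    (hp : p = (1 / (2 * r)) *
      ((r + lam + δ) + Real.sqrt ((r + lam + δ) ^ 2 - 4 * r * lam)))
    (x : ℝ) (hx : x < c / r)
    (f : ℝ → ℝ) (hf₁ : ContDiff ℝ 1 f) (hf₂ : Antitone f)
    (hf₃ : ∃ C : ℝ, ∀ y : ℝ, |f y| ≤ C)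
    (hf₄ : ∀ y : ℝ, x ≤ y → f y = 0)
    (h : ℝ → ℝ → ℝ)
    (hh : ∀ w m : ℝ, m ≤ w → w < c / r →
      h w m = f m - ∫ y in Iic m, deriv f y * ((c - r * w) / (c - r * y)) ^ p) :
    (∀ m w : ℝ, m < w → w < c / r →
      HasDerivAt (fun m' => h w m')
        (deriv f m * (1 - ((c - r * w) / (c - r * m)) ^ p)) m) ∧
    (∀ m : ℝ, m < c / r → HasDerivWithinAt (fun m' => h m m') 0 (Iic m) m) ∧
    (∀ m : ℝ, m < c / r →
      Tendsto (fun w => h w m) (nhdsWithin (c / r) (Iio (c / r))) (nhds (f m)) ∧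
      Tendsto (fun w => deriv (fun w' => h w' m) w)
        (nhdsWithin (c / r) (Iio (c / r))) (nhds 0)) := by
  have hδpos : 0 < δ := by
    have : 0 < (mu - r) / sigma := div_pos (sub_pos.2 hmu) hsigma
    rw [hδ]; positivity
  have hp1 : 1 < p := hp ▸ one_lt_exponent hr hlam hδpos
  have hp0 : 0 < p := one_pos.trans hp1
  have hpos : ∀ w, w < c / r → 0 < c - r * w := fun w hw => by
    linarith [(lt_div_iff₀ hr).1 hw]
  have hfd : ∀ y, HasDerivAt f (deriv f y) y :=
    fun y => (hf₁.differentiable one_ne_zero y).hasDerivAt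
  set G : ℝ → ℝ := fun m => ∫ y in Iic m, deriv f y / (c - r * y) ^ p with hG
  have hGd : ∀ m, m < c / r → HasDerivAt G (deriv f m / (c - r * m) ^ p) m := fun m hm =>
    hasDerivAt_integral_weighted hr hp0 (hf₁.continuous_deriv le_rfl)
      (integrableOn_Iic_deriv_of_bounded_antitone hf₁ hf₂ hf₃) hm
  have hfac : ∀ w m, m ≤ w → w < c / r → h w m = f m - (c - r * w) ^ p * G m := by
    intro w m hmw hw
    rw [hh w m hmw hw, hG, ← integral_const_mul]
    congr 1
    refine setIntegral_congr_fun measurableSet_Iic fun y hy => ?_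
    have hy' : 0 < c - r * y := hpos y ((mem_Iic.1 hy).trans_lt (hmw.trans_lt hw))
    simp only [Real.div_rpow (hpos w hw).le hy'.le]
    ring
  have hdm : ∀ w m, m ≤ w → w < c / r →
      HasDerivAt (fun m' => f m' - (c - r * w) ^ p * G m')
        (deriv f m * (1 - ((c - r * w) / (c - r * m)) ^ p)) m := by
    intro w m hmw hw
    have hm := hmw.trans_lt hw
    refine ((hfd m).sub ((hGd m hm).const_mul ((c - r * w) ^ p))).congr_deriv ?_
    rw [Real.div_rpow (hpos w hw).le (hpos m hm).le]
    ring
  refine ⟨fun m w hmw hw => ?_, fun m hm => ?_, fun m hm => ?_⟩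
  · refine (hdm w m hmw.le hw).congr_of_eventuallyEq ?_
    filter_upwards [Iio_mem_nhds hmw] with m' hm'
    exact hfac w m' (le_of_lt hm') hw
  · have h0 := hdm m m le_rfl hm
    rw [div_self (hpos m hm).ne', Real.one_rpow, sub_self, mul_zero] at h0
    exact h0.hasDerivWithinAt.congr (fun m' hm' => hfac m m' hm' hm) (hfac m m le_rfl hm)
  · have hnear : Ioo m (c / r) ∈ 𝓝[<] (c / r) := Ioo_mem_nhdsLT hm
    -- `c - r w` vanishes at `w = c/r`, so every positive power of it tends to zero there.
    have hpow : ∀ q : ℝ, 0 < q → Tendsto (fun w => (c - r * w) ^ q) (𝓝[<] (c / r)) (𝓝 0) := by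
      intro q hq
      have hc' : Continuous fun w : ℝ => (c - r * w) ^ q :=
        Continuous.rpow_const (by fun_prop) fun _ => Or.inr hq.le
      have ht := (hc'.tendsto (c / r)).mono_left (nhdsWithin_le_nhds (s := Iio (c / r)))
      rwa [mul_div_cancel₀ c hr.ne', sub_self, Real.zero_rpow hq.ne'] at ht
    constructor
    · have ht := ((hpow p hp0).mul_const (G m)).const_sub (f m)
      rw [zero_mul, sub_zero] at ht
      refine ht.congr' ?_
      filter_upwards [hnear] with w hw
      exact (hfac w m hw.1.le hw.2).symm
    · have ht := (hpow (p - 1) (sub_pos.2 hp1)).mul_const (r * p * G m)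
      rw [zero_mul] at ht
      refine ht.congr' ?_
      filter_upwards [hnear] with w hw
      have hlin : HasDerivAt (fun w' : ℝ => c - r * w') (-r) w := by
        simpa using ((hasDerivAt_id w).const_mul r).const_sub c
      have hd := ((hlin.rpow_const (p := p) (Or.inr hp1.le)).mul_const (G m)).const_sub (f m)
      have heq : (fun w' => h w' m) =ᶠ[𝓝 w] fun w' => f m - (c - r * w') ^ p * G m := by
        filter_upwards [Ioo_mem_nhds hw.1 hw.2] with w' hw'
        exact hfac w' m hw'.1.le hw'.2
      rw [(hd.congr_of_eventuallyEq heq).deriv]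
      ring
end

section
/- Let φ : (a, b) → ℝ be twice continuously differentiable with φ″(w) > 0 and φ′(w) < 0 for all w ∈ (a, b). Then the map w ↦ −φ′(w) is a strictly decreasing C¹ bijection from (a, b) onto an open interval J, and the Fenchel–Legendre-type transform φ̃ defined on J by φ̃(−φ′(w)) = φ(w) + w(−φ′(w)) (equivalently, φ̃(y) = min over w of [φ(w) + w y], attained at the unique w with φ′(w) = −y) is twice continuously differentiable on J with φ̃′(−φ′(w)) = w and φ̃″(−φ′(w)) = −1/φ″(w). Moreover, if φ satisfies the nonlinear equation λ φ(w) = (r w − c) φ′(w) − δ (φ′(w))²/φ″(w) for all w ∈ (a, b), then φ̃ satisfies the linear equation λ φ̃(y) + (r − λ) y φ̃′(y) − δ y² φ̃″(y) = c y for all y ∈ J. -/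
open Set

/-!
The map `g w = -φ' w` has continuous derivative `-φ'' < 0`, so it is strictly decreasing, its
image `J` is open by the inverse function theorem, and its inverse `h` on `J` is `C¹` with
`h' (g w) = -1 / φ'' w`. The transform is `φt y = φ (h y) + h y * y`. Differentiating,
`φt' = φ' (h y) h' + h' y + h = h`, because `φ' (h y) = -y` (the envelope theorem); hence `φt` is
`C²` with second derivative `h'`. That `φt` is a minimum is the strict tangent line inequality for
the strictly convex `φ`. With `y = -φ' w`, `φt' = w` and `φt'' = -1 / φ'' w`, the linear equation
is the nonlinear one rearranged.
-/

/-- Strict tangent line inequality for a function with strictly increasing derivative. -/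
lemma tangent_lt {a b : ℝ} {φ φ' : ℝ → ℝ}
    (hd1 : ∀ w ∈ Ioo a b, HasDerivAt φ (φ' w) w) (hmono : StrictMonoOn φ' (Ioo a b))
    {v w : ℝ} (hv : v ∈ Ioo a b) (hw : w ∈ Ioo a b) (hne : w ≠ v) :
    φ v + φ' v * (w - v) < φ w := by
  -- In both cases the mean value theorem gives `φ w - φ v = φ' ξ * (w - v)` with `ξ` between.
  rcases lt_or_gt_of_ne hne with h | h
  · have hsub : Icc w v ⊆ Ioo a b := fun x hx => ⟨hw.1.trans_le hx.1, hx.2.trans_lt hv.2⟩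
    obtain ⟨ξ, hξ, he⟩ := exists_hasDerivAt_eq_slope φ φ' h
      (fun x hx => (hd1 x (hsub hx)).continuousAt.continuousWithinAt)
      (fun x hx => hd1 x (hsub (Ioo_subset_Icc_self hx)))
    have hlt := hmono (hsub (Ioo_subset_Icc_self hξ)) hv hξ.2
    rw [he, div_lt_iff₀ (sub_pos.2 h)] at hlt
    linarith
  · have hsub : Icc v w ⊆ Ioo a b := fun x hx => ⟨hv.1.trans_le hx.1, hx.2.trans_lt hw.2⟩
    obtain ⟨ξ, hξ, he⟩ := exists_hasDerivAt_eq_slope φ φ' h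
      (fun x hx => (hd1 x (hsub hx)).continuousAt.continuousWithinAt)
      (fun x hx => hd1 x (hsub (Ioo_subset_Icc_self hx)))
    have hlt := hmono hv (hsub (Ioo_subset_Icc_self hξ)) hξ.1
    rw [he, lt_div_iff₀ (sub_pos.2 h)] at hlt
    linarith

/-- A function with continuous derivative on an open set is `C¹` there. -/
lemma contDiffOn_one_of_hasDerivAt {f f' : ℝ → ℝ} {s : Set ℝ} (hs : IsOpen s)
    (hf : ∀ x ∈ s, HasDerivAt f (f' x) x) (hc : ContinuousOn f' s) : ContDiffOn ℝ 1 f s := by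
  rw [show (1 : WithTop ℕ∞) = 0 + 1 from rfl, contDiffOn_succ_iff_deriv_of_isOpen hs]
  refine ⟨fun x hx => (hf x hx).differentiableAt.differentiableWithinAt, by simp, ?_⟩
  rw [contDiffOn_zero]
  exact hc.congr fun x hx => (hf x hx).deriv

/-- The Fenchel–Legendre transform of a strictly convex, strictly decreasing `C²`
function `φ` on `(a, b)`: the map `w ↦ −φ′(w)` is a strictly decreasing `C¹` bijection
from `(a, b)` onto an open interval `J`, the transform `φ̃` with
`φ̃(−φ′(w)) = φ(w) + w(−φ′(w))` (equivalently the minimum of `φ(w) + w y` over `w`,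
attained uniquely where `φ′(w) = −y`) is `C²` on `J` with `φ̃′(−φ′(w)) = w` and
`φ̃″(−φ′(w)) = −1/φ″(w)`, and if `φ` solves the nonlinear HJB equation
`λ φ(w) = (r w − c) φ′(w) − δ (φ′(w))²/φ″(w)` on `(a, b)`, then `φ̃` solves the linear
equation `λ φ̃(y) + (r − λ) y φ̃′(y) − δ y² φ̃″(y) = c y` on `J`. -/
theorem stmt_14 (r lam c mu sigma : ℝ) (hr : 0 < r) (hlam : 0 < lam) (hc : 0 < c)
    (hmu : r < mu) (hsigma : 0 < sigma)
    (δ : ℝ) (hδ : δ = (1 / 2) * ((mu - r) / sigma) ^ 2)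
    (a b : ℝ) (hab : a < b)
    (φ φ' φ'' : ℝ → ℝ)
    (hd1 : ∀ w ∈ Ioo a b, HasDerivAt φ (φ' w) w)
    (hd2 : ∀ w ∈ Ioo a b, HasDerivAt φ' (φ'' w) w)
    (hcont : ContinuousOn φ'' (Ioo a b))
    (hconv : ∀ w ∈ Ioo a b, 0 < φ'' w)
    (hdec : ∀ w ∈ Ioo a b, φ' w < 0) :
    StrictAntiOn (fun w => -φ' w) (Ioo a b) ∧
    InjOn (fun w => -φ' w) (Ioo a b) ∧
    ContDiffOn ℝ 1 (fun w => -φ' w) (Ioo a b) ∧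
    IsOpen ((fun w => -φ' w) '' Ioo a b) ∧
    ((fun w => -φ' w) '' Ioo a b).OrdConnected ∧
    ∃ φt : ℝ → ℝ,
      (∀ w ∈ Ioo a b, φt (-φ' w) = φ w + w * (-φ' w)) ∧
      (∀ w₀ ∈ Ioo a b, ∀ w ∈ Ioo a b,
        φt (-φ' w₀) ≤ φ w + w * (-φ' w₀) ∧
        (φ w + w * (-φ' w₀) = φt (-φ' w₀) → w = w₀)) ∧
      ContDiffOn ℝ 2 φt ((fun w => -φ' w) '' Ioo a b) ∧
      (∀ w ∈ Ioo a b,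
        deriv φt (-φ' w) = w ∧ deriv (deriv φt) (-φ' w) = -1 / φ'' w) ∧
      ((∀ w ∈ Ioo a b, lam * φ w = (r * w - c) * φ' w - δ * (φ' w) ^ 2 / φ'' w) →
        ∀ w ∈ Ioo a b,
          lam * φt (-φ' w) + (r - lam) * (-φ' w) * deriv φt (-φ' w) -
            δ * (-φ' w) ^ 2 * deriv (deriv φt) (-φ' w) = c * (-φ' w)) := by
  have hS : IsOpen (Ioo a b) := isOpen_Ioo
  have hmono : StrictMonoOn φ' (Ioo a b) := by
    refine strictMonoOn_of_deriv_pos (convex_Ioo a b)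
      (fun w hw => (hd2 w hw).continuousAt.continuousWithinAt) fun w hw => ?_
    rw [interior_Ioo] at hw
    rw [(hd2 w hw).deriv]
    exact hconv w hw
  set g : ℝ → ℝ := fun w => -φ' w with hg
  have hanti : StrictAntiOn g (Ioo a b) := hmono.neg
  have hinj : InjOn g (Ioo a b) := hanti.injOn
  have hgd : ∀ w ∈ Ioo a b, HasDerivAt g (-φ'' w) w := fun w hw => (hd2 w hw).neg
  have hgC : ContDiffOn ℝ 1 g (Ioo a b) := contDiffOn_one_of_hasDerivAt hS hgd hcont.neg
  have hgs : ∀ w ∈ Ioo a b, HasStrictDerivAt g (-φ'' w) w := fun w hw =>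
    (hgC.contDiffAt (hS.mem_nhds hw)).hasStrictDerivAt' (hgd w hw) (by simp)
  have hne : ∀ w ∈ Ioo a b, -φ'' w ≠ 0 := fun w hw => (neg_neg_of_pos (hconv w hw)).ne
  have hJ : IsOpen (g '' Ioo a b) := by
    rw [isOpen_iff_mem_nhds]
    rintro _ ⟨w, hw, rfl⟩
    rw [← (hgs w hw).map_nhds_eq (hne w hw)]
    exact Filter.image_mem_map (hS.mem_nhds hw)
  have hord : (g '' Ioo a b).OrdConnected :=
    (isPreconnected_Ioo.image g hgC.continuousOn).ordConnected
  obtain ⟨h, hh⟩ : ∃ h : ℝ → ℝ, ∀ w ∈ Ioo a b, h (g w) = w :=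
    ⟨Function.invFunOn g (Ioo a b), hinj.leftInvOn_invFunOn⟩
  have hhd : ∀ w ∈ Ioo a b, HasDerivAt h (-φ'' w)⁻¹ (g w) := fun w hw =>
    ((hgs w hw).to_local_left_inverse (hne w hw)
      (Filter.eventually_of_mem (hS.mem_nhds hw) hh)).hasDerivAt
  have hmaps : MapsTo h (g '' Ioo a b) (Ioo a b) := by
    rintro _ ⟨w, hw, rfl⟩
    rwa [hh w hw]
  have hhC : ContDiffOn ℝ 1 h (g '' Ioo a b) := by
    refine contDiffOn_one_of_hasDerivAt (f' := fun y => (-φ'' (h y))⁻¹) hJ ?_ ?_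
    · rintro _ ⟨w, hw, rfl⟩
      simpa only [hh w hw] using hhd w hw
    · refine ContinuousOn.inv₀ (hcont.comp ?_ hmaps).neg fun y hy => hne _ (hmaps hy)
      rintro _ ⟨w, hw, rfl⟩
      exact (hhd w hw).continuousAt.continuousWithinAt
  let φt : ℝ → ℝ := fun y => φ (h y) + h y * y
  have hval : ∀ w ∈ Ioo a b, φt (g w) = φ w + w * g w := fun w hw => by
    simp only [φt, hh w hw]
  -- Envelope theorem: the terms containing `h'` cancel since `φ' w = -g w`.
  have hφtd : ∀ y ∈ g '' Ioo a b, HasDerivAt φt (h y) y := by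
    rintro _ ⟨w, hw, rfl⟩
    have h1 : HasDerivAt φ (φ' w) (h (g w)) := by rw [hh w hw]; exact hd1 w hw
    have h2 := (h1.comp (g w) (hhd w hw)).add ((hhd w hw).mul (hasDerivAt_id (g w)))
    refine h2.congr_deriv ?_
    simp only [hg, id]
    ring
  have hderiv : ∀ w ∈ Ioo a b, deriv φt (g w) = w ∧ deriv (deriv φt) (g w) = -1 / φ'' w := by
    intro w hw
    have hm : g w ∈ g '' Ioo a b := mem_image_of_mem g hw
    refine ⟨(hφtd _ hm).deriv.trans (hh w hw), ?_⟩
    have hev : deriv φt =ᶠ[nhds (g w)] h :=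
      Filter.eventually_of_mem (hJ.mem_nhds hm) fun y hy => (hφtd y hy).deriv
    rw [hev.deriv_eq, (hhd w hw).deriv, inv_neg, neg_div, one_div]
  refine ⟨hanti, hinj, hgC, hJ, hord, φt, hval, ?_, ?_, hderiv, ?_⟩
  · intro v hv w hw
    have e : φt (-φ' v) = φ v + v * -φ' v := hval v hv
    rw [e]
    by_cases hwv : w = v
    · simp [hwv]
    · have := tangent_lt hd1 hmono hv hw hwv
      exact ⟨by linarith, fun h' => by linarith⟩
  · rw [show (2 : WithTop ℕ∞) = 1 + 1 from by norm_num, contDiffOn_succ_iff_deriv_of_isOpen hJ]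
    exact ⟨fun y hy => (hφtd y hy).differentiableAt.differentiableWithinAt, by simp,
      hhC.congr fun y hy => (hφtd y hy).deriv⟩
  · intro hode w hw
    have e0 : φt (-φ' w) = φ w + w * -φ' w := hval w hw
    have e1 : deriv φt (-φ' w) = w := (hderiv w hw).1
    have e2 : deriv (deriv φt) (-φ' w) = -1 / φ'' w := (hderiv w hw).2
    rw [e0, e1, e2, mul_add, hode w hw]
    ring
end

section
/- Define z(y) = ((p − 1)/p) y − 1. Then for every y > 0, the right-hand side of the Riccati-type equation evaluated along z exceeds the slope of z by an explicit positive amount: 1 − (λ/(δ y²)) z(y)² − (((r − λ) y + λ)/(δ y²)) z(y) − (p − 1)/p = (r p − λ)/(p δ y) > 0. -/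
/-!
The number `p` is the larger root of `r p² − (r + λ + δ) p + λ = 0`, which rearranges to
`δ p = (r p − λ)(p − 1)`. Put `a = (p − 1)/p`. After multiplication by `δ y²`, the difference between
the right-hand side of the Riccati equation along `z(y) = a y − 1` and the slope `a` is a quadratic
polynomial in `y`. Its constant term is `−λ + λ = 0`, its `y²` coefficient is
`(δ − (p − 1)(r p − λ)/p)/p`, which vanishes by the relation above, and its `y` coefficient is
`(r p − λ)/p`. Positivity follows from `√((r + λ + δ)² − 4 r λ) ≥ |λ − r|`, since then
`2 r p ≥ (r + λ + δ) + (λ − r) = 2 λ + δ > 2 λ`.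
-/

/-- Contact-point computation in the proof of Theorem 3.5: along `z(y) = ((p−1)/p)y − 1`
the right-hand side of the Riccati equation exceeds the slope of `z` by exactly
`(rp − λ)/(p δ y) > 0`, for every `y > 0`. -/
theorem stmt_15 (r lam mu sigma : ℝ) (hr : 0 < r) (hlam : 0 < lam)
    (hmu : r < mu) (hsigma : 0 < sigma)
    (δ : ℝ) (hδ : δ = (1 / 2) * ((mu - r) / sigma) ^ 2)
    (p : ℝ)
    (hp : p = (1 / (2 * r)) *
      ((r + lam + δ) + Real.sqrt ((r + lam + δ) ^ 2 - 4 * r * lam)))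
    (z : ℝ → ℝ) (hz : ∀ y : ℝ, z y = ((p - 1) / p) * y - 1) :
    ∀ y : ℝ, 0 < y →
      1 - (lam / (δ * y ^ 2)) * (z y) ^ 2 - (((r - lam) * y + lam) / (δ * y ^ 2)) * z y -
          (p - 1) / p = (r * p - lam) / (p * δ * y) ∧
      0 < (r * p - lam) / (p * δ * y) := by
  have hδ0 : 0 < δ := by
    rw [hδ]
    have : 0 < (mu - r) / sigma := div_pos (by linarith) hsigma
    positivity
  have hD : (lam - r) ^ 2 ≤ (r + lam + δ) ^ 2 - 4 * r * lam := by
    nlinarith [mul_pos hr hδ0, mul_pos hlam hδ0, sq_nonneg δ]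
  have hs : lam - r ≤ Real.sqrt ((r + lam + δ) ^ 2 - 4 * r * lam) := Real.le_sqrt_of_sq_le hD
  have hsq := Real.sq_sqrt ((sq_nonneg _).trans hD)
  have h2 : Real.sqrt ((r + lam + δ) ^ 2 - 4 * r * lam) = 2 * r * p - (r + lam + δ) := by
    rw [hp]
    field_simp
    ring
  rw [h2] at hs hsq
  have hrp : 0 < r * p - lam := by linarith
  have hp0 : 0 < p := by
    have : 0 < r * p := by linarith
    exact pos_of_mul_pos_right this hr.le
  have hquad : δ * p = (r * p - lam) * (p - 1) := by
    have : r * (δ * p) = r * ((r * p - lam) * (p - 1)) := by linear_combination (-1 / 4) * hsq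
    exact mul_left_cancel₀ hr.ne' this
  intro y hy
  refine ⟨?_, by positivity⟩
  rw [hz]
  field_simp
  linear_combination y ^ 2 * hquad
end

section
/- Let 0 < y_x < y_M and let g : [y_x, y_M) → ℝ be differentiable with g′(y) = 1 − (λ/(δ y²)) g(y)² − (((r − λ) y + λ)/(δ y²)) g(y) for all y ∈ [y_x, y_M), and with initial condition g(y_x) = ((p − 1)/p) y_x − 1. Then g(y) > ((p − 1)/p) y − 1 for all y ∈ (y_x, y_M). (In the original variables this proves Theorem 3.5: for M < m ≤ w < x, the optimal investment strategy for minimizing expected shortfall at death satisfies π^U(w) > ((μ − r)/σ²)(1/(p − 1))(c/r − w).) -/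
/-!
Write `a = (p - 1) / p` and `h y = a * y - 1`. The number `p` is the larger root of
`r p² - (r + λ + δ) p + λ = 0`, that is, `(r p - λ)(p - 1) = δ p`, and `p > 1`, `r p > λ`
(`root_facts`). Substituting `h` into the right-hand side of the Riccati equation and using
this relation leaves `a + (r - λ / p) / (δ y)`, which exceeds `a = h' y` (`line_slope_lt`).
So `h` is a strict subsolution starting at `g yx`: wherever `g` meets `h`, `g` is strictly
steeper. The fencing form of the mean value theorem gives `h ≤ g`; an interior contact point
would then be a local minimum of `g - h` with positive derivative, which is impossible.
-/

open Set

lemma root_facts {r lam δ p : ℝ} (hr : 0 < r) (hlam : 0 < lam) (hδ : 0 < δ)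
    (hp : p = (1 / (2 * r)) *
      ((r + lam + δ) + Real.sqrt ((r + lam + δ) ^ 2 - 4 * r * lam))) :
    1 < p ∧ lam < r * p ∧ (r * p - lam) * (p - 1) = δ * p := by
  set s := Real.sqrt ((r + lam + δ) ^ 2 - 4 * r * lam) with hs
  have h1 : 0 < r * δ := mul_pos hr hδ
  have h2 : 0 < lam * δ := mul_pos hlam hδ
  have hD : 0 ≤ (r + lam + δ) ^ 2 - 4 * r * lam := by
    nlinarith [sq_nonneg (r - lam + δ)]
  have hs2 : s ^ 2 = (r + lam + δ) ^ 2 - 4 * r * lam := Real.sq_sqrt hD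
  have hp2 : 2 * r * p = (r + lam + δ) + s := by
    rw [hp]; field_simp
  have hs3 : r - lam - δ < s := Real.lt_sqrt_of_sq_lt (by nlinarith)
  have hs4 : lam - r - δ < s := Real.lt_sqrt_of_sq_lt (by nlinarith)
  refine ⟨?_, by linarith, ?_⟩
  · by_contra hcon
    nlinarith
  · have hs5 : s = 2 * r * p - (r + lam + δ) := by linarith
    rw [hs5] at hs2
    have : r * ((r * p - lam) * (p - 1) - δ * p) = 0 := by linarith
    rcases mul_eq_zero.mp this with h | h
    · exact absurd h hr.ne'
    · linarith

/-- The line `y ↦ ((p - 1) / p) * y - 1` is a strict subsolution of the Riccati equation. -/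
lemma line_slope_lt {r lam δ p y : ℝ} (hδ : 0 < δ) (hy : 0 < y) (hp : 1 < p)
    (hrp : lam < r * p) (hroot : (r * p - lam) * (p - 1) = δ * p) :
    (p - 1) / p < 1 - (lam / (δ * y ^ 2)) * (((p - 1) / p) * y - 1) ^ 2 -
      (((r - lam) * y + lam) / (δ * y ^ 2)) * (((p - 1) / p) * y - 1) := by
  have hp0 : 0 < p := by linarith
  have key : 1 - (lam / (δ * y ^ 2)) * (((p - 1) / p) * y - 1) ^ 2 -
      (((r - lam) * y + lam) / (δ * y ^ 2)) * (((p - 1) / p) * y - 1)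
      = (p - 1) / p + (r * p - lam) / (p * (δ * y)) := by
    field_simp
    linear_combination (-y ^ 2) * hroot
  rw [key]
  have : 0 < (r * p - lam) / (p * (δ * y)) := div_pos (by linarith) (by positivity)
  linarith

/-- Comparison result (Theorem 3.5): if `g` solves the Riccati equation
`g′(y) = 1 − (λ/(δy²))g(y)² − (((r−λ)y + λ)/(δy²))g(y)` on `[y_x, y_M)` with
`g(y_x) = ((p−1)/p)y_x − 1`, then `g(y) > ((p−1)/p)y − 1` for all `y ∈ (y_x, y_M)`. -/
theorem stmt_16 (r lam mu sigma : ℝ) (hr : 0 < r) (hlam : 0 < lam)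
    (hmu : r < mu) (hsigma : 0 < sigma)
    (δ : ℝ) (hδ : δ = (1 / 2) * ((mu - r) / sigma) ^ 2)
    (p : ℝ)
    (hp : p = (1 / (2 * r)) *
      ((r + lam + δ) + Real.sqrt ((r + lam + δ) ^ 2 - 4 * r * lam)))
    (yx yM : ℝ) (hyx : 0 < yx) (hyxM : yx < yM)
    (g : ℝ → ℝ)
    (hg : ∀ y ∈ Ico yx yM,
      HasDerivWithinAt g
        (1 - (lam / (δ * y ^ 2)) * (g y) ^ 2 -
          (((r - lam) * y + lam) / (δ * y ^ 2)) * g y)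
        (Ico yx yM) y)
    (hinit : g yx = ((p - 1) / p) * yx - 1) :
    ∀ y ∈ Ioo yx yM, ((p - 1) / p) * y - 1 < g y := by
  have hδ0 : 0 < δ := by
    have : 0 < (mu - r) / sigma := div_pos (by linarith) hsigma
    rw [hδ]; positivity
  obtain ⟨hp1, hrp, hroot⟩ := root_facts hr hlam hδ0 hp
  have hline (y : ℝ) : HasDerivAt (fun z => ((p - 1) / p) * z - 1) ((p - 1) / p) y := by
    simpa using ((hasDerivAt_id y).const_mul ((p - 1) / p)).sub_const 1
  have hslope {y : ℝ} (hy : yx ≤ y) (heq : ((p - 1) / p) * y - 1 = g y) :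
      (p - 1) / p < 1 - (lam / (δ * y ^ 2)) * (g y) ^ 2 -
          (((r - lam) * y + lam) / (δ * y ^ 2)) * g y := by
    rw [← heq]
    exact line_slope_lt hδ0 (hyx.trans_le hy) hp1 hrp hroot
  have hle : ∀ y ∈ Ico yx yM, ((p - 1) / p) * y - 1 ≤ g y := by
    intro b hb
    refine image_le_of_deriv_right_lt_deriv_boundary' (a := yx) (b := b)
      (f := fun z => ((p - 1) / p) * z - 1)
      (fun z _ => (hline z).continuousAt.continuousWithinAt)
      (fun z _ => (hline z).hasDerivWithinAt) hinit.ge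
      (fun z hz => ((hg z ⟨hz.1, hz.2.trans_lt hb.2⟩).continuousWithinAt).mono
        fun w hw => ⟨hw.1, hw.2.trans_lt hb.2⟩)
      (fun z hz => (hg z ⟨hz.1, hz.2.trans hb.2⟩).mono_of_mem_nhdsWithin ?_)
      (fun z hz heq => hslope hz.1 heq) ⟨hb.1, le_rfl⟩
    exact Filter.mem_of_superset (Ico_mem_nhdsGE (hz.2.trans hb.2))
      fun w hw => ⟨hz.1.trans hw.1, hw.2⟩
  intro y hy
  refine (hle y ⟨hy.1.le, hy.2⟩).lt_of_ne fun heq => ?_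
  have hd := ((hg y ⟨hy.1.le, hy.2⟩).hasDerivAt (Ico_mem_nhds hy.1 hy.2)).sub (hline y)
  have hmin : IsLocalMin (g - fun z => ((p - 1) / p) * z - 1) y := by
    filter_upwards [Ico_mem_nhds hy.1 hy.2] with z hz
    have := hle z hz
    simp only [Pi.sub_apply]
    linarith
  have h0 := hmin.hasDerivAt_eq_zero hd
  have := hslope hy.1.le heq
  linarith
end
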